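/- Let μ₁ be a finite Borel measure on ℝ with compact support and let μ₂ be a diffuse finite Borel measure on ℝ with compact support (μ₂({x}) = 0 for every x). Let 1 < p ≤ q < ∞ with p' = p/(p−1) and q' = q/(q−1). If B := sup_{r∈ℝ} μ₂([r,+∞))^{1/q} μ₁((−∞,r))^{1/p'} is finite, then for every Borel measurable function f : ℝ → [0,+∞], (∫_ℝ (∫_{(−∞,r)} f dμ₁)^q dμ₂(r))^{1/q} ≤ min((p')^{1/p'} p^{1/q}, (q')^{1/p'} q^{1/q}) B (∫_ℝ f^p dμ₁)^{1/p}. In particular, μ₁ is allowed to have atoms. -/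

import Mathlib

open MeasureTheory ENNReal
open scoped NNReal

/-!
Write `V s = μ₁ (-∞, s]` and `W r = μ₂ [r, ∞)`, and fix `θ ∈ (0, 1)`. The function `V` pushes `μ₁`
forward to a measure which stochastically dominates Lebesgue measure on `(0, μ₁ ℝ)`, atoms or not,
so that `∫_{(-∞, r)} V ^ (-θ) dμ₁ ≤ (1 - θ)⁻¹ μ₁ (-∞, r) ^ (1 - θ)`; the same holds for `W` and
`μ₂`.

Hölder's inequality applied to `f = (f V ^ (θ / p')) V ^ (-θ / p')` then bounds
`∫_{(-∞, r)} f dμ₁` by `(∫_{(-∞, r)} (f V ^ (θ / p')) ^ p dμ₁) ^ (1 / p)` times a power of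
`μ₁ (-∞, r)`, which the definition of `B` converts into a power of `W r`. Minkowski's integral
inequality with exponent `q / p ≥ 1` exchanges the two integrations, the integral of the power of
`W` over `(s, ∞)` is controlled by `μ₂ (s, ∞) ^ θ`, and `μ₂ (s, ∞) ^ (1 / q) V s ^ (1 / p') ≤ B`
cancels the weight. The constant obtained is `(1 - θ) ^ (-1 / p') θ ^ (-1 / q)`; the two terms of
the minimum are the choices `θ = 1 / p` and `θ = 1 / q`.
-/

lemma ennreal_rpow_right_comm (x : ℝ≥0∞) (a b : ℝ) : (x ^ a) ^ b = (x ^ b) ^ a := by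
  rw [← ENNReal.rpow_mul, mul_comm, ENNReal.rpow_mul]

lemma ennreal_rpow_one_div_le_of_le_mul_rpow {k : ℝ} (hk : 0 < k) {I M : ℝ≥0∞} (hI : I ≠ ⊤)
    (h : I ≤ M * I ^ ((k - 1) / k)) : I ^ (1 / k) ≤ M := by
  rcases eq_or_ne I 0 with rfl | hI0
  · simp [hk]
  have hsplit : I = I ^ (1 / k) * I ^ ((k - 1) / k) := by
    rw [← ENNReal.rpow_add _ _ hI0 hI, ← add_div, add_sub_cancel, div_self hk.ne', ENNReal.rpow_one]
  have h0 : I ^ ((k - 1) / k) ≠ 0 := (ENNReal.rpow_pos (pos_iff_ne_zero.2 hI0) hI).ne'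
  have htop : I ^ ((k - 1) / k) ≠ ⊤ := ENNReal.rpow_ne_top_of_ne_zero hI0 hI
  refine (ENNReal.mul_le_mul_iff_left h0 htop).1 ?_
  rwa [← hsplit]

lemma lintegral_Ioo_ofReal_rpow_neg {b m : ℝ} (hb : b < 1) (hm : 0 ≤ m) :
    ∫⁻ x in Set.Ioo 0 m, ENNReal.ofReal (x ^ (-b)) = ENNReal.ofReal ((1 - b)⁻¹ * m ^ (1 - b)) := by
  have hint : IntegrableOn (fun x : ℝ ↦ x ^ (-b)) (Set.Ioo 0 m) :=
    (intervalIntegrable_iff_integrableOn_Ioo_of_le hm).1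
      (intervalIntegral.intervalIntegrable_rpow' (by linarith))
  have hnonneg : ∀ᵐ x ∂volume.restrict (Set.Ioo 0 m), 0 ≤ x ^ (-b) := by
    filter_upwards [ae_restrict_mem measurableSet_Ioo] with x hx using Real.rpow_nonneg hx.1.le _
  rw [← ofReal_integral_eq_lintegral_ofReal hint hnonneg, ← integral_Ioc_eq_integral_Ioo,
    ← intervalIntegral.integral_of_le hm, integral_rpow (Or.inl (by linarith)),
    neg_add_eq_sub, Real.zero_rpow (by linarith), sub_zero, div_eq_inv_mul]

section Minkowski

variable {α β : Type*} [MeasurableSpace α] [MeasurableSpace β] {μ : Measure α} {ν : Measure β}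

lemma exists_measurable_le_lintegral_lt_top [SigmaFinite ν] {f : β → ℝ≥0∞} {L : ℝ≥0∞}
    (hL : L < ∫⁻ x, f x ∂ν) :
    ∃ g : β → ℝ≥0∞, Measurable g ∧ g ≤ f ∧ ∫⁻ x, g x ∂ν < ⊤ ∧ L < ∫⁻ x, g x ∂ν := by
  simp only [lintegral_eq_nnreal f, lt_iSup_iff] at hL
  obtain ⟨φ, hφf, hLφ⟩ := hL
  rw [← SimpleFunc.lintegral_eq_lintegral] at hLφ
  obtain ⟨g, hgφ, hg_fin, hLg⟩ := exists_lt_lintegral_simpleFunc_of_lt_lintegral hLφ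
  exact ⟨fun x ↦ g x, g.measurable.coe_nnreal_ennreal,
    fun x ↦ (ENNReal.coe_le_coe.2 (hgφ x)).trans (hφf x), hg_fin, hLg⟩

lemma lintegral_lintegral_mul_rpow_le [SFinite μ] [SFinite ν] {k : ℝ} (hk : 1 < k)
    {g : β → α → ℝ≥0∞} (hg : Measurable (Function.uncurry g)) {φ : β → ℝ≥0∞} (hφ : Measurable φ) :
    ∫⁻ r, (∫⁻ s, g r s ∂μ) * φ r ^ (k - 1) ∂ν ≤
      (∫⁻ s, (∫⁻ r, g r s ^ k ∂ν) ^ (1 / k) ∂μ) * (∫⁻ r, φ r ^ k ∂ν) ^ ((k - 1) / k) := by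
  have hconj : k.HolderConjugate (k / (k - 1)) := .conjExponent hk
  have hφk : Measurable fun r ↦ φ r ^ (k - 1) := hφ.pow_const _
  have hφ_conj (r) : (φ r ^ (k - 1)) ^ (k / (k - 1)) = φ r ^ k := by
    rw [← ENNReal.rpow_mul, mul_div_cancel₀ k (sub_pos.2 hk).ne']
  calc ∫⁻ r, (∫⁻ s, g r s ∂μ) * φ r ^ (k - 1) ∂ν
      = ∫⁻ r, ∫⁻ s, g r s * φ r ^ (k - 1) ∂μ ∂ν :=
        lintegral_congr fun r ↦ (lintegral_mul_const _ hg.of_uncurry_left).symm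
    _ = ∫⁻ s, ∫⁻ r, g r s * φ r ^ (k - 1) ∂ν ∂μ :=
        lintegral_lintegral_swap (hg.mul (hφk.comp measurable_fst)).aemeasurable
    _ ≤ ∫⁻ s, (∫⁻ r, g r s ^ k ∂ν) ^ (1 / k) * (∫⁻ r, φ r ^ k ∂ν) ^ ((k - 1) / k) ∂μ := by
        refine lintegral_mono fun s ↦ ?_
        simpa only [hφ_conj, one_div_div, Pi.mul_apply] using
          ENNReal.lintegral_mul_le_Lp_mul_Lq ν hconj (f := fun r ↦ g r s)
            hg.of_uncurry_right.aemeasurable hφk.aemeasurable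
    _ = _ := lintegral_mul_const _ (Measurable.lintegral_prod_left' (hg.pow_const k) |>.pow_const _)

theorem minkowski_lintegral_lintegral_le [SFinite μ] [SigmaFinite ν] {k : ℝ} (hk : 1 ≤ k)
    {g : β → α → ℝ≥0∞} (hg : Measurable (Function.uncurry g)) :
    (∫⁻ r, (∫⁻ s, g r s ∂μ) ^ k ∂ν) ^ (1 / k) ≤ ∫⁻ s, (∫⁻ r, g r s ^ k ∂ν) ^ (1 / k) ∂μ := by
  rcases hk.eq_or_lt with rfl | hk
  · simpa only [ENNReal.rpow_one, div_one] using (lintegral_lintegral_swap hg.aemeasurable).le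
  have hk0 : 0 < k := one_pos.trans hk
  rw [one_div, ENNReal.rpow_inv_le_iff hk0, ← one_div]
  -- Hölder gives `I ≤ M * I ^ ((k - 1) / k)` for `I = ∫ φ ^ k`, which is no information when
  -- `I = ⊤`; hence the minorants `φ` with finite integral.
  refine le_of_forall_lt fun L hL ↦ ?_
  obtain ⟨ψ, hψ, hψ_le, hψ_fin, hLψ⟩ := exists_measurable_le_lintegral_lt_top hL
  refine hLψ.trans_le ?_
  set φ : β → ℝ≥0∞ := fun r ↦ ψ r ^ k⁻¹
  have hφψ (r) : φ r ^ k = ψ r := ENNReal.rpow_inv_rpow hk0.ne' _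
  have hφ_le (r) : φ r ≤ ∫⁻ s, g r s ∂μ := (ENNReal.rpow_inv_le_iff hk0).2 (hψ_le r)
  have hφ_split (r) : φ r ^ k = φ r * φ r ^ (k - 1) := by
    conv_lhs => rw [← add_sub_cancel 1 k]
    rw [ENNReal.rpow_add_of_nonneg _ _ zero_le_one (sub_nonneg.2 hk.le), ENNReal.rpow_one]
  simp only [← hφψ] at hψ_fin ⊢
  rw [← ENNReal.rpow_inv_le_iff hk0, ← one_div]
  refine ennreal_rpow_one_div_le_of_le_mul_rpow hk0 hψ_fin.ne ?_
  calc ∫⁻ r, φ r ^ k ∂ν ≤ ∫⁻ r, (∫⁻ s, g r s ∂μ) * φ r ^ (k - 1) ∂ν :=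
        lintegral_mono fun r ↦ (hφ_split r).trans_le (mul_le_mul_left (hφ_le r) _)
    _ ≤ _ := lintegral_lintegral_mul_rpow_le hk hg (hψ.pow_const _)

end Minkowski

section DistributionFunction

open Set

variable {α : Type*} [LinearOrder α] [TopologicalSpace α] [OrderTopology α]
  [MeasurableSpace α] (μ : Measure α)

lemma measurable_measure_Iic [BorelSpace α] : Measurable fun s ↦ μ (Iic s) :=
  Monotone.measurable fun _ _ h ↦ measure_mono (Iic_subset_Iic.2 h)

lemma measurable_measure_Ici [BorelSpace α] : Measurable fun s ↦ μ (Ici s) :=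
  measurable_measure_Iic (α := αᵒᵈ) μ

variable [SecondCountableTopology α]

lemma measure_le_iSup_measure_Iic (S : Set α) :
    μ S ≤ ⨆ s ∈ S, μ (Iic s) := by
  by_cases hmax : ∃ m, IsGreatest S m
  · obtain ⟨m, hmS, hm⟩ := hmax
    exact (measure_mono hm).trans (le_iSup₂_of_le m hmS le_rfl)
  obtain ⟨T, hTS, hT, hTU⟩ := TopologicalSpace.isOpen_biUnion_countable S Iio fun s _ ↦ isOpen_Iio
  have hST : S ⊆ ⋃ t ∈ T, Iic t := fun x hx ↦ by
    have : ∃ s ∈ S, x < s := by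
      by_contra! h
      exact hmax ⟨x, hx, h⟩
    have hxT : x ∈ ⋃ t ∈ T, Iio t := by simpa [hTU] using this
    exact biUnion_mono subset_rfl (fun _ _ ↦ Iio_subset_Iic_self) hxT
  have hdir : DirectedOn (Function.onFun (· ⊆ ·) Iic) T :=
    fun a ha b hb ↦ (le_total a b).elim (fun h ↦ ⟨b, hb, Iic_subset_Iic.2 h, subset_rfl⟩)
      fun h ↦ ⟨a, ha, subset_rfl, Iic_subset_Iic.2 h⟩
  calc μ S ≤ μ (⋃ t ∈ T, Iic t) := measure_mono hST
    _ = ⨆ t ∈ T, μ (Iic t) := measure_biUnion_eq_iSup hT hdir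
    _ ≤ ⨆ s ∈ S, μ (Iic s) := biSup_mono hTS

lemma measure_le_iSup_measure_Ici (S : Set α) :
    μ S ≤ ⨆ s ∈ S, μ (Ici s) :=
  measure_le_iSup_measure_Iic (α := αᵒᵈ) μ S

lemma ae_measure_Iic_ne_zero : ∀ᵐ s ∂μ, μ (Iic s) ≠ 0 := by
  rw [ae_iff]
  refine nonpos_iff_eq_zero.1 ((measure_le_iSup_measure_Iic μ _).trans ?_)
  simp

lemma ae_measure_Ici_ne_zero : ∀ᵐ s ∂μ, μ (Ici s) ≠ 0 :=
  ae_measure_Iic_ne_zero (α := αᵒᵈ) μ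

variable [BorelSpace α]

lemma lintegral_comp_measureReal_Iic_le [IsFiniteMeasure μ] {φ : ℝ → ℝ}
    (hφ : Measurable φ) (hφ_anti : AntitoneOn φ (Ioi 0)) (hφ_nonneg : ∀ x ∈ Ioi 0, 0 ≤ φ x) :
    ∫⁻ s, ENNReal.ofReal (φ (μ.real (Iic s))) ∂μ ≤
      ∫⁻ x in Ioo 0 (μ.real univ), ENNReal.ofReal (φ x) := by
  have hF : Measurable fun s ↦ φ (μ.real (Iic s)) :=
    hφ.comp (measurable_measure_Iic μ).ennreal_toReal
  have hF_nonneg : ∀ᵐ s ∂μ, 0 ≤ φ (μ.real (Iic s)) := by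
    filter_upwards [ae_measure_Iic_ne_zero μ] with s hs
    exact hφ_nonneg _ (ENNReal.toReal_pos hs (measure_ne_top _ _))
  have hφ_nonneg' : ∀ᵐ x ∂volume.restrict (Ioo 0 (μ.real univ)), 0 ≤ φ x := by
    filter_upwards [ae_restrict_mem measurableSet_Ioo] with x hx using hφ_nonneg x hx.1
  rw [lintegral_eq_lintegral_meas_lt _ hF_nonneg hF.aemeasurable,
    lintegral_eq_lintegral_meas_lt _ hφ_nonneg' hφ.aemeasurable]
  refine lintegral_mono fun t ↦ (measure_le_iSup_measure_Iic μ _).trans (iSup₂_le fun s hs ↦ ?_)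
  have hsub : Ioo 0 (μ.real (Iic s)) ⊆ {x | t < φ x} ∩ Ioo 0 (μ.real univ) := fun x hx ↦
    ⟨(show t < φ _ from hs).trans_le (hφ_anti hx.1 (hx.1.trans hx.2) hx.2.le),
      hx.1, hx.2.trans_le (measureReal_mono (subset_univ _))⟩
  calc μ (Iic s) = volume (Ioo 0 (μ.real (Iic s))) := by
        rw [Real.volume_Ioo, sub_zero, ofReal_measureReal]
    _ ≤ volume ({x | t < φ x} ∩ Ioo 0 (μ.real univ)) := measure_mono hsub
    _ ≤ volume.restrict (Ioo 0 (μ.real univ)) {x | t < φ x} := Measure.le_restrict_apply _ _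

lemma lintegral_measure_Iic_rpow_neg_le {b : ℝ} (hb₀ : 0 ≤ b) (hb₁ : b < 1) :
    ∫⁻ s, μ (Iic s) ^ (-b) ∂μ ≤ ENNReal.ofReal (1 - b)⁻¹ * μ univ ^ (1 - b) := by
  have hb : 0 < 1 - b := sub_pos.2 hb₁
  by_cases hμ : μ univ = ⊤
  · simp [hμ, hb]
  have : IsFiniteMeasure μ := ⟨Ne.lt_top hμ⟩
  have hreal : ∫⁻ s, μ (Iic s) ^ (-b) ∂μ = ∫⁻ s, ENNReal.ofReal (μ.real (Iic s) ^ (-b)) ∂μ := by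
    refine lintegral_congr_ae ?_
    filter_upwards [ae_measure_Iic_ne_zero μ] with s hs
    have hpos : 0 < μ.real (Iic s) := ENNReal.toReal_pos hs (measure_ne_top _ _)
    rw [← ENNReal.ofReal_rpow_of_pos hpos, ofReal_measureReal]
  have hanti : AntitoneOn (fun x : ℝ ↦ x ^ (-b)) (Ioi 0) := fun x hx y _ hxy ↦
    Real.rpow_le_rpow_of_nonpos hx hxy (neg_nonpos.2 hb₀)
  calc ∫⁻ s, μ (Iic s) ^ (-b) ∂μ
      ≤ ∫⁻ x in Ioo 0 (μ.real univ), ENNReal.ofReal (x ^ (-b)) :=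
        hreal.trans_le <| lintegral_comp_measureReal_Iic_le μ (by fun_prop) hanti
          fun x hx ↦ Real.rpow_nonneg hx.le _
    _ = ENNReal.ofReal (1 - b)⁻¹ * μ univ ^ (1 - b) := by
        rw [lintegral_Ioo_ofReal_rpow_neg hb₁ measureReal_nonneg,
          ENNReal.ofReal_mul (by positivity),
          ← ENNReal.ofReal_rpow_of_nonneg measureReal_nonneg hb.le, ofReal_measureReal]

lemma setLIntegral_Iio_measure_Iic_rpow_neg_le {b : ℝ} (hb₀ : 0 ≤ b) (hb₁ : b < 1) (r : α) :
    ∫⁻ s in Iio r, μ (Iic s) ^ (-b) ∂μ ≤ ENNReal.ofReal (1 - b)⁻¹ * μ (Iio r) ^ (1 - b) := by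
  calc ∫⁻ s in Iio r, μ (Iic s) ^ (-b) ∂μ
      = ∫⁻ s in Iio r, μ.restrict (Iio r) (Iic s) ^ (-b) ∂μ :=
        setLIntegral_congr_fun measurableSet_Iio fun s hs ↦ by
          rw [Measure.restrict_eq_self μ (Iic_subset_Iio.2 hs)]
    _ ≤ _ := by
        simpa using lintegral_measure_Iic_rpow_neg_le (μ.restrict (Iio r)) hb₀ hb₁

lemma setLIntegral_Ioi_measure_Ici_rpow_neg_le {b : ℝ} (hb₀ : 0 ≤ b) (hb₁ : b < 1) (r : α) :
    ∫⁻ s in Ioi r, μ (Ici s) ^ (-b) ∂μ ≤ ENNReal.ofReal (1 - b)⁻¹ * μ (Ioi r) ^ (1 - b) :=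
  setLIntegral_Iio_measure_Iic_rpow_neg_le (α := αᵒᵈ) μ hb₀ hb₁ r

end DistributionFunction

section HardyInequality

open Set

variable {α : Type*} [LinearOrder α] [MeasurableSpace α] {μ₁ μ₂ : Measure α} {p q p' q' θ : ℝ}

/-- Muckenhoupt's constant `B` of the pair `(μ₁, μ₂)`: it governs the boundedness of
`f ↦ (r ↦ ∫_{(-∞, r)} f dμ₁)` from `L^p(μ₁)` to `L^q(μ₂)`, where `p'` is conjugate to `p`. -/
noncomputable def muckenhouptConst (μ₁ μ₂ : Measure α) (p' q : ℝ) : ℝ≥0∞ :=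
  ⨆ r : α, μ₂ (Ici r) ^ (1 / q) * μ₁ (Iio r) ^ (1 / p')

lemma measure_Iio_rpow_le_muckenhouptConst_mul (hq : 0 < q) (hB : muckenhouptConst μ₁ μ₂ p' q ≠ ⊤)
    {r : α} (hr : μ₂ (Ici r) ≠ 0) :
    μ₁ (Iio r) ^ (1 / p') ≤ muckenhouptConst μ₁ μ₂ p' q * μ₂ (Ici r) ^ (-(1 / q)) := by
  have hr' : μ₂ (Ici r) ^ (1 / q) ≠ 0 := by simp [hr, hq, hq.le]
  rw [ENNReal.rpow_neg, ← div_eq_mul_inv, ENNReal.le_div_iff_mul_le (.inl hr') (.inr hB), mul_comm]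
  exact le_iSup (fun r ↦ μ₂ (Ici r) ^ (1 / q) * μ₁ (Iio r) ^ (1 / p')) r

variable [TopologicalSpace α] [OrderTopology α] [SecondCountableTopology α]

lemma measure_Ioi_rpow_mul_measure_Iic_rpow_le_muckenhouptConst (hp' : 0 < p') (hq : 0 < q)
    (s : α) :
    μ₂ (Ioi s) ^ (1 / q) * μ₁ (Iic s) ^ (1 / p') ≤ muckenhouptConst μ₁ μ₂ p' q := by
  rcases eq_or_ne (muckenhouptConst μ₁ μ₂ p' q) ⊤ with hB | hB
  · exact hB ▸ le_top
  rcases eq_or_ne (μ₁ (Iic s) ^ (1 / p')) 0 with h0 | h0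
  · simp only [h0, mul_zero, zero_le]
  rw [← ENNReal.le_div_iff_mul_le (.inl h0) (.inr hB), one_div, ENNReal.rpow_inv_le_iff hq]
  refine (measure_le_iSup_measure_Ici μ₂ _).trans (iSup₂_le fun r hr ↦ ?_)
  rw [← ENNReal.rpow_inv_le_iff hq, ← one_div, ENNReal.le_div_iff_mul_le (.inl h0) (.inr hB)]
  calc μ₂ (Ici r) ^ (1 / q) * μ₁ (Iic s) ^ (1 / p')
      ≤ μ₂ (Ici r) ^ (1 / q) * μ₁ (Iio r) ^ (1 / p') := by
        gcongr
        exact hr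
    _ ≤ muckenhouptConst μ₁ μ₂ p' q :=
        le_iSup (fun r ↦ μ₂ (Ici r) ^ (1 / q) * μ₁ (Iio r) ^ (1 / p')) r

variable [BorelSpace α] {f : α → ℝ≥0∞}

lemma lintegral_setLIntegral_Iio_rpow_mul_le [SFinite μ₁] [SigmaFinite μ₂] {k : ℝ} (hk : 1 ≤ k)
    {Φ w : α → ℝ≥0∞} (hΦ : Measurable Φ) (hw : Measurable w) :
    (∫⁻ r, (∫⁻ s in Iio r, Φ s ∂μ₁) ^ k * w r ∂μ₂) ^ (1 / k) ≤
      ∫⁻ s, Φ s * (∫⁻ r in Ioi s, w r ∂μ₂) ^ (1 / k) ∂μ₁ := by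
  have hk0 : 0 < k := one_pos.trans_le hk
  set g : α → α → ℝ≥0∞ := fun r s ↦ (Iio r).indicator Φ s * w r ^ k⁻¹
  have hg : Measurable (Function.uncurry g) :=
    (Measurable.indicator (hΦ.comp measurable_snd)
      (measurableSet_lt measurable_snd measurable_fst)).mul ((hw.comp measurable_fst).pow_const _)
  have hg_left (r) : (∫⁻ s, g r s ∂μ₁) ^ k = (∫⁻ s in Iio r, Φ s ∂μ₁) ^ k * w r := by
    rw [lintegral_mul_const _ (hΦ.indicator measurableSet_Iio),
      lintegral_indicator measurableSet_Iio, ENNReal.mul_rpow_of_nonneg _ _ hk0.le,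
      ENNReal.rpow_inv_rpow hk0.ne']
  have hg_pow (r s) : g r s ^ k = (Ioi s).indicator (fun r ↦ Φ s ^ k * w r) r := by
    by_cases h : s < r
    · simp [g, h, ENNReal.mul_rpow_of_nonneg _ _ hk0.le, ENNReal.rpow_inv_rpow hk0.ne']
    · simp [g, h, hk0]
  have hg_right (s) :
      (∫⁻ r, g r s ^ k ∂μ₂) ^ (1 / k) = Φ s * (∫⁻ r in Ioi s, w r ∂μ₂) ^ (1 / k) := by
    simp_rw [hg_pow]
    rw [lintegral_indicator measurableSet_Ioi, lintegral_const_mul _ hw, one_div,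
      ENNReal.mul_rpow_of_nonneg _ _ (by positivity), ENNReal.rpow_rpow_inv hk0.ne']
  simpa only [hg_left, hg_right] using minkowski_lintegral_lintegral_le (μ := μ₁) (ν := μ₂) hk hg

lemma setLIntegral_Iio_le_of_holderConjugate (hp : p.HolderConjugate p') (hθ₀ : 0 ≤ θ)
    (hθ₁ : θ < 1) (hf : Measurable f) {r : α} (hr : μ₁ (Iio r) ≠ ⊤) :
    ∫⁻ s in Iio r, f s ∂μ₁ ≤
      (∫⁻ s in Iio r, (f s * μ₁ (Iic s) ^ (θ / p')) ^ p ∂μ₁) ^ (1 / p) *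
        (ENNReal.ofReal (1 - θ)⁻¹ * μ₁ (Iio r) ^ (1 - θ)) ^ (1 / p') := by
  have hp' := hp.symm.pos
  have hV := measurable_measure_Iic μ₁
  have hfactor : ∀ᵐ s ∂μ₁.restrict (Iio r),
      f s = f s * μ₁ (Iic s) ^ (θ / p') * μ₁ (Iic s) ^ (-(θ / p')) := by
    filter_upwards [ae_restrict_of_ae (ae_measure_Iic_ne_zero μ₁),
      ae_restrict_mem measurableSet_Iio] with s hs hsr
    have hs_top : μ₁ (Iic s) ≠ ⊤ := measure_ne_top_of_subset (Iic_subset_Iio.2 hsr) hr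
    rw [mul_assoc, ← ENNReal.rpow_add _ _ hs hs_top, add_neg_cancel, ENNReal.rpow_zero, mul_one]
  have hV_pow (s) : (μ₁ (Iic s) ^ (-(θ / p'))) ^ p' = μ₁ (Iic s) ^ (-θ) := by
    rw [← ENNReal.rpow_mul, neg_mul, div_mul_cancel₀ _ hp'.ne']
  calc ∫⁻ s in Iio r, f s ∂μ₁
      = ∫⁻ s in Iio r, f s * μ₁ (Iic s) ^ (θ / p') * μ₁ (Iic s) ^ (-(θ / p')) ∂μ₁ :=
        lintegral_congr_ae hfactor
    _ ≤ (∫⁻ s in Iio r, (f s * μ₁ (Iic s) ^ (θ / p')) ^ p ∂μ₁) ^ (1 / p) *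
          (∫⁻ s in Iio r, (μ₁ (Iic s) ^ (-(θ / p'))) ^ p' ∂μ₁) ^ (1 / p') :=
        ENNReal.lintegral_mul_le_Lp_mul_Lq _ hp (hf.mul (hV.pow_const _)).aemeasurable
          (hV.pow_const _).aemeasurable
    _ ≤ _ := by
        simp only [hV_pow]
        gcongr
        exact setLIntegral_Iio_measure_Iic_rpow_neg_le μ₁ hθ₀ hθ₁ r

lemma setLIntegral_Iio_le_muckenhouptConst (hp : p.HolderConjugate p') (hq : 0 < q) (hθ₀ : 0 ≤ θ)
    (hθ₁ : θ < 1) (hB : muckenhouptConst μ₁ μ₂ p' q ≠ ⊤) (hf : Measurable f) {r : α}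
    (hr : μ₂ (Ici r) ≠ 0) :
    ∫⁻ s in Iio r, f s ∂μ₁ ≤
      ENNReal.ofReal (1 - θ)⁻¹ ^ (1 / p') * muckenhouptConst μ₁ μ₂ p' q ^ (1 - θ) *
        ((∫⁻ s in Iio r, (f s * μ₁ (Iic s) ^ (θ / p')) ^ p ∂μ₁) ^ (1 / p) *
          μ₂ (Ici r) ^ (-(1 - θ) / q)) := by
  have hp' := hp.symm.pos
  have hθ : 0 ≤ 1 - θ := sub_nonneg.2 hθ₁.le
  have hVW := measure_Iio_rpow_le_muckenhouptConst_mul hq hB hr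
  have hr_top : μ₁ (Iio r) ≠ ⊤ := by
    have hW_top : μ₂ (Ici r) ^ (-(1 / q)) ≠ ⊤ := by simp [ENNReal.rpow_neg, hr, hq, hq.le]
    have hV_top := ne_top_of_le_ne_top (ENNReal.mul_ne_top hB hW_top) hVW
    intro h
    simp [h, hp'] at hV_top
  set B := muckenhouptConst μ₁ μ₂ p' q
  set J := ∫⁻ s in Iio r, (f s * μ₁ (Iic s) ^ (θ / p')) ^ p ∂μ₁
  set c := ENNReal.ofReal (1 - θ)⁻¹
  calc ∫⁻ s in Iio r, f s ∂μ₁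
      ≤ J ^ (1 / p) * (c * μ₁ (Iio r) ^ (1 - θ)) ^ (1 / p') :=
        setLIntegral_Iio_le_of_holderConjugate hp hθ₀ hθ₁ hf hr_top
    _ = J ^ (1 / p) * (c ^ (1 / p') * (μ₁ (Iio r) ^ (1 / p')) ^ (1 - θ)) := by
        rw [ENNReal.mul_rpow_of_nonneg _ _ (by positivity), ennreal_rpow_right_comm _ (1 - θ)]
    _ ≤ J ^ (1 / p) * (c ^ (1 / p') * (B * μ₂ (Ici r) ^ (-(1 / q))) ^ (1 - θ)) := by gcongr
    _ = c ^ (1 / p') * B ^ (1 - θ) * (J ^ (1 / p) * μ₂ (Ici r) ^ (-(1 - θ) / q)) := by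
        rw [ENNReal.mul_rpow_of_nonneg _ _ hθ, ← ENNReal.rpow_mul,
          show -(1 / q) * (1 - θ) = -(1 - θ) / q by ring]
        ring

lemma setLIntegral_Iio_rpow_le_muckenhouptConst (hp : p.HolderConjugate p') (hq : 0 < q)
    (hθ₀ : 0 ≤ θ) (hθ₁ : θ < 1) (hB : muckenhouptConst μ₁ μ₂ p' q ≠ ⊤) (hf : Measurable f) {r : α}
    (hr : μ₂ (Ici r) ≠ 0) :
    (∫⁻ s in Iio r, f s ∂μ₁) ^ q ≤
      (ENNReal.ofReal (1 - θ)⁻¹ ^ (1 / p') * muckenhouptConst μ₁ μ₂ p' q ^ (1 - θ)) ^ q *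
        ((∫⁻ s in Iio r, (f s * μ₁ (Iic s) ^ (θ / p')) ^ p ∂μ₁) ^ (q / p) *
          μ₂ (Ici r) ^ (-(1 - θ))) := by
  rw [← ENNReal.le_rpow_inv_iff hq, ENNReal.mul_rpow_of_nonneg _ _ (by positivity),
    ENNReal.rpow_rpow_inv hq.ne', ENNReal.mul_rpow_of_nonneg _ _ (by positivity),
    ← ENNReal.rpow_mul, ← ENNReal.rpow_mul, show q / p * q⁻¹ = 1 / p by field_simp,
    ← div_eq_mul_inv]
  exact setLIntegral_Iio_le_muckenhouptConst hp hq hθ₀ hθ₁ hB hf hr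

lemma rpow_mul_setLIntegral_Ioi_rpow_le_muckenhouptConst (hp : 0 < p) (hp' : 0 < p') (hq : 0 < q)
    (hθ₀ : 0 < θ) (hθ₁ : θ ≤ 1) (x : ℝ≥0∞) (s : α) :
    (x * μ₁ (Iic s) ^ (θ / p')) ^ p * (∫⁻ r in Ioi s, μ₂ (Ici r) ^ (-(1 - θ)) ∂μ₂) ^ (p / q) ≤
      (ENNReal.ofReal θ⁻¹ ^ (1 / q) * muckenhouptConst μ₁ μ₂ p' q ^ θ) ^ p * x ^ p := by
  have hlayer := setLIntegral_Ioi_measure_Ici_rpow_neg_le μ₂ (b := 1 - θ) (by linarith)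
    (by linarith) s
  rw [_root_.sub_sub_cancel] at hlayer
  set c := ENNReal.ofReal θ⁻¹
  have hpq : p / q = 1 / q * p := by ring
  calc (x * μ₁ (Iic s) ^ (θ / p')) ^ p * (∫⁻ r in Ioi s, μ₂ (Ici r) ^ (-(1 - θ)) ∂μ₂) ^ (p / q)
      ≤ (x * μ₁ (Iic s) ^ (θ / p')) ^ p * (c * μ₂ (Ioi s) ^ θ) ^ (p / q) := by gcongr
    _ = (c ^ (1 / q) * (μ₂ (Ioi s) ^ (1 / q) * μ₁ (Iic s) ^ (1 / p')) ^ θ) ^ p * x ^ p := by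
        rw [hpq, ENNReal.rpow_mul, ← ENNReal.mul_rpow_of_nonneg _ _ hp.le,
          ← ENNReal.mul_rpow_of_nonneg _ _ hp.le, ENNReal.mul_rpow_of_nonneg _ _ hθ₀.le,
          ENNReal.mul_rpow_of_nonneg c _ (by positivity), ennreal_rpow_right_comm _ θ,
          ← ENNReal.rpow_mul _ (1 / p'), one_div_mul_eq_div]
        ring_nf
    _ ≤ _ := by
        gcongr
        exact measure_Ioi_rpow_mul_measure_Iic_rpow_le_muckenhouptConst hp' hq s

lemma lintegral_weighted_setLIntegral_Iio_rpow_le_muckenhouptConst [SFinite μ₁] [SigmaFinite μ₂]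
    (hp : 0 < p) (hp' : 0 < p') (hpq : p ≤ q) (hθ₀ : 0 < θ) (hθ₁ : θ ≤ 1) (hf : Measurable f) :
    (∫⁻ r, (∫⁻ s in Iio r, (f s * μ₁ (Iic s) ^ (θ / p')) ^ p ∂μ₁) ^ (q / p) *
        μ₂ (Ici r) ^ (-(1 - θ)) ∂μ₂) ^ (1 / q) ≤
      ENNReal.ofReal θ⁻¹ ^ (1 / q) * muckenhouptConst μ₁ μ₂ p' q ^ θ *
        (∫⁻ s, f s ^ p ∂μ₁) ^ (1 / p) := by
  have hq : 0 < q := hp.trans_le hpq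
  set C := ENNReal.ofReal θ⁻¹ ^ (1 / q) * muckenhouptConst μ₁ μ₂ p' q ^ θ
  set Φ : α → ℝ≥0∞ := fun s ↦ (f s * μ₁ (Iic s) ^ (θ / p')) ^ p
  set w : α → ℝ≥0∞ := fun r ↦ μ₂ (Ici r) ^ (-(1 - θ))
  have hΦ : Measurable Φ := (hf.mul ((measurable_measure_Iic μ₁).pow_const _)).pow_const _
  have hw : Measurable w := (measurable_measure_Ici μ₂).pow_const _
  have hminkowski : (∫⁻ r, (∫⁻ s in Iio r, Φ s ∂μ₁) ^ (q / p) * w r ∂μ₂) ^ (p / q) ≤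
      C ^ p * ∫⁻ s, f s ^ p ∂μ₁ := by
    calc (∫⁻ r, (∫⁻ s in Iio r, Φ s ∂μ₁) ^ (q / p) * w r ∂μ₂) ^ (p / q)
        ≤ ∫⁻ s, Φ s * (∫⁻ r in Ioi s, w r ∂μ₂) ^ (p / q) ∂μ₁ := by
          simpa only [one_div_div] using lintegral_setLIntegral_Iio_rpow_mul_le
            ((one_le_div hp).2 hpq) hΦ hw
      _ ≤ ∫⁻ s, C ^ p * f s ^ p ∂μ₁ := lintegral_mono fun s ↦
          rpow_mul_setLIntegral_Ioi_rpow_le_muckenhouptConst hp hp' hq hθ₀ hθ₁ (f s) s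
      _ = C ^ p * ∫⁻ s, f s ^ p ∂μ₁ := lintegral_const_mul _ (hf.pow_const _)
  rw [show 1 / q = p / q * p⁻¹ by field_simp, ENNReal.rpow_mul, ENNReal.rpow_inv_le_iff hp,
    ENNReal.mul_rpow_of_nonneg _ _ hp.le, one_div, ENNReal.rpow_inv_rpow hp.ne']
  exact hminkowski

theorem lintegral_setLIntegral_Iio_rpow_le_muckenhouptConst [SFinite μ₁] [SigmaFinite μ₂]
    (hp : p.HolderConjugate p') (hpq : p ≤ q) (hθ₀ : 0 < θ) (hθ₁ : θ < 1)
    (hB : muckenhouptConst μ₁ μ₂ p' q ≠ ⊤) (hf : Measurable f) :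
    (∫⁻ r, (∫⁻ s in Iio r, f s ∂μ₁) ^ q ∂μ₂) ^ (1 / q) ≤
      ENNReal.ofReal ((1 - θ)⁻¹ ^ (1 / p') * θ⁻¹ ^ (1 / q)) * muckenhouptConst μ₁ μ₂ p' q *
        (∫⁻ s, f s ^ p ∂μ₁) ^ (1 / p) := by
  have hq : 0 < q := hp.pos.trans_le hpq
  have hθ : 0 < 1 - θ := sub_pos.2 hθ₁
  set B := muckenhouptConst μ₁ μ₂ p' q
  set c₁ := ENNReal.ofReal (1 - θ)⁻¹
  set c₂ := ENNReal.ofReal θ⁻¹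
  set G : α → ℝ≥0∞ := fun r ↦
    (∫⁻ s in Iio r, (f s * μ₁ (Iic s) ^ (θ / p')) ^ p ∂μ₁) ^ (q / p) * μ₂ (Ici r) ^ (-(1 - θ))
  have hconst : (c₁ ^ (1 / p') * B ^ (1 - θ)) ^ q ≠ ⊤ := by
    have := hp.symm.pos
    finiteness
  have hfactor : c₁ ^ (1 / p') * B ^ (1 - θ) * (c₂ ^ (1 / q) * B ^ θ) =
      ENNReal.ofReal ((1 - θ)⁻¹ ^ (1 / p') * θ⁻¹ ^ (1 / q)) * B := by
    rw [mul_mul_mul_comm, ← ENNReal.rpow_add_of_nonneg _ _ hθ.le hθ₀.le, sub_add_cancel,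
      ENNReal.rpow_one, ENNReal.ofReal_mul (by positivity),
      ENNReal.ofReal_rpow_of_pos (inv_pos.2 hθ), ENNReal.ofReal_rpow_of_pos (inv_pos.2 hθ₀)]
  calc (∫⁻ r, (∫⁻ s in Iio r, f s ∂μ₁) ^ q ∂μ₂) ^ (1 / q)
      ≤ (∫⁻ r, (c₁ ^ (1 / p') * B ^ (1 - θ)) ^ q * G r ∂μ₂) ^ (1 / q) := by
        gcongr ?_ ^ _
        refine lintegral_mono_ae ?_
        filter_upwards [ae_measure_Ici_ne_zero μ₂] with r hr using
          setLIntegral_Iio_rpow_le_muckenhouptConst hp hq hθ₀.le hθ₁ hB hf hr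
    _ = c₁ ^ (1 / p') * B ^ (1 - θ) * (∫⁻ r, G r ∂μ₂) ^ (1 / q) := by
        rw [lintegral_const_mul' _ _ hconst, one_div q,
          ENNReal.mul_rpow_of_nonneg _ _ (by positivity), ENNReal.rpow_rpow_inv hq.ne']
    _ ≤ c₁ ^ (1 / p') * B ^ (1 - θ) * (c₂ ^ (1 / q) * B ^ θ * (∫⁻ s, f s ^ p ∂μ₁) ^ (1 / p)) := by
        gcongr
        exact lintegral_weighted_setLIntegral_Iio_rpow_le_muckenhouptConst hp.pos hp.symm.pos hpq
          hθ₀ hθ₁.le hf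
    _ = _ := by rw [← mul_assoc, hfactor]

theorem hardy_inequality_mu2_diffuse_compact_general [SFinite μ₁] [SigmaFinite μ₂]
    (hp : p.HolderConjugate p') (hq : q.HolderConjugate q') (hpq : p ≤ q)
    (hB : muckenhouptConst μ₁ μ₂ p' q ≠ ⊤) (hf : Measurable f) :
    (∫⁻ r, (∫⁻ s in Iio r, f s ∂μ₁) ^ q ∂μ₂) ^ (1 / q) ≤
      ENNReal.ofReal (min (p' ^ (1 / p') * p ^ (1 / q)) (q' ^ (1 / p') * q ^ (1 / q))) *
        muckenhouptConst μ₁ μ₂ p' q * (∫⁻ s, f s ^ p ∂μ₁) ^ (1 / p) := by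
  rcases min_choice (p' ^ (1 / p') * p ^ (1 / q)) (q' ^ (1 / p') * q ^ (1 / q)) with hmin | hmin
  · simpa only [hmin, hp.one_sub_inv, inv_inv] using
      lintegral_setLIntegral_Iio_rpow_le_muckenhouptConst hp hpq (inv_pos.2 hp.pos)
        (inv_lt_one_of_one_lt₀ hp.lt) hB hf
  · simpa only [hmin, hq.one_sub_inv, inv_inv] using
      lintegral_setLIntegral_Iio_rpow_le_muckenhouptConst hp hpq (inv_pos.2 hq.pos)
        (inv_lt_one_of_one_lt₀ hq.lt) hB hf

end HardyInequality

/-- One-variable Hardy inequality for compactly supported finite Borel measures,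
`μ₂` diffuse, `μ₁` possibly with atoms. -/
theorem hardy_inequality_mu2_diffuse_compact
    (μ₁ μ₂ : Measure ℝ) [IsFiniteMeasure μ₁] [IsFiniteMeasure μ₂]
    (hd₂ : ∀ x : ℝ, μ₂ {x} = 0)
    (K₁ K₂ : Set ℝ) (hK₁ : IsCompact K₁) (hK₂ : IsCompact K₂)
    (hμ₁K : μ₁ K₁ᶜ = 0) (hμ₂K : μ₂ K₂ᶜ = 0)
    (p q p' q' : ℝ) (hp : 1 < p) (hpq : p ≤ q)
    (hp' : p' = p / (p - 1)) (hq' : q' = q / (q - 1))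
    (B : ℝ≥0∞)
    (hB : B = ⨆ r : ℝ, μ₂ (Set.Ici r) ^ (1 / q) * μ₁ (Set.Iio r) ^ (1 / p'))
    (hBfin : B ≠ ⊤) :
    ∀ f : ℝ → ℝ≥0∞, Measurable f →
      (∫⁻ r, (∫⁻ s in Set.Iio r, f s ∂μ₁) ^ q ∂μ₂) ^ (1 / q) ≤
        ENNReal.ofReal (min (p' ^ (1 / p') * p ^ (1 / q)) (q' ^ (1 / p') * q ^ (1 / q))) * B *
          (∫⁻ s, f s ^ p ∂μ₁) ^ (1 / p) := by
  intro f hf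
  subst hB hp' hq'
  exact hardy_inequality_mu2_diffuse_compact_general (.conjExponent hp)
    (.conjExponent (hp.trans_le hpq)) hpq hBfin hf
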